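/- For all λ-terms M and N and every variable x, T(M[N/x]) = ⋃ { supp(∂_x s · t̄) | s ∈ T(M) and t̄ a finite multiset of elements of T(N) }, where M[N/x] is the capture-avoiding substitution of N for x in M. -/

import Mathlib

/-! Ordinary λ-terms, in de Bruijn notation. -/
inductive Lam : Type
  | var : ℕ → Lam
  | lam : Lam → Lam
  | app : Lam → Lam → Lam
  deriving DecidableEq

namespace Lam

/-- Shift the free indices `≥ d` up by one. -/
def lift (d : ℕ) : Lam → Lam
  | var n => if n < d then var n else var (n + 1)
  | lam M => lam (lift (d + 1) M)
  | app P Q => app (lift d P) (lift d Q)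

/-- Capture-avoiding substitution of `N` for the free variable `k`. -/
def subst : Lam → ℕ → Lam → Lam
  | var n, k, N => if n = k then N else if k < n then var (n - 1) else var n
  | lam M, k, N => lam (subst M (k + 1) (lift 0 N))
  | app P Q, k, N => app (subst P k N) (subst Q k N)

/-- Number of free occurrences of the variable `k`. -/
def count (k : ℕ) : Lam → ℕ
  | var n => if n = k then 1 else 0
  | lam M => count (k + 1) M
  | app P Q => count k P + count k Q

/-- One-step β-reduction. -/
inductive Beta : Lam → Lam → Prop
  | beta (M N : Lam) : Beta (app (lam M) N) (subst M 0 N)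
  | lam {M M'} : Beta M M' → Beta (lam M) (lam M')
  | appL {P P' Q} : Beta P P' → Beta (app P Q) (app P' Q)
  | appR {P Q Q'} : Beta Q Q' → Beta (app P Q) (app P Q')

/-- The head of the application spine is a variable, with no λ on the spine. -/
def neutral : Lam → Bool
  | var _ => true
  | lam _ => false
  | app P _ => neutral P

/-- Head-normal forms: `λx₁…λxₘ. x N₁ … Nₙ`. -/
def isHNF : Lam → Prop
  | var _ => True
  | lam M => isHNF M
  | app P _ => neutral P = true

/-- The head-reduction function `H`: contracts the head redex, identity on head-normal
forms. -/
def H : Lam → Lam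
  | var n => var n
  | lam M => lam (H M)
  | app (lam P) Q => subst P 0 Q
  | app (var n) Q => app (var n) Q
  | app (app P₁ P₂) Q => app (H (app P₁ P₂)) Q

/-- The left-parallel reduction function `L`: identity on β-normal forms, propagated to
the arguments on head-normal forms, contraction of the head redex otherwise. -/
def L : Lam → Lam
  | var n => var n
  | lam M => lam (L M)
  | app (lam P) Q => subst P 0 Q
  | app (var n) Q => app (var n) (L Q)
  | app (app P₁ P₂) Q =>
      if neutral (app P₁ P₂) then app (L (app P₁ P₂)) (L Q)
      else app (L (app P₁ P₂)) Q

/-- Iterated application `M N₁ … Nₙ`. -/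
def mkApps (M : Lam) (Ns : List Lam) : Lam := Ns.foldl app M

/-- All free variables are `< d`. -/
def ClosedAt (d : ℕ) : Lam → Prop
  | var n => n < d
  | lam M => ClosedAt (d + 1) M
  | app P Q => ClosedAt d P ∧ ClosedAt d Q

/-- `M` is head-normalizable: it β-reduces in finitely many steps to a head-normal form. -/
def HeadNormalizable (M : Lam) : Prop :=
  ∃ N, Relation.ReflTransGen Beta M N ∧ isHNF N

/-- `M` is a β-normal form: it contains no β-redex, i.e. admits no β-step. -/
def BetaNF (M : Lam) : Prop := ¬∃ N, Beta M N

/-- `M` is β-normalizable: it β-reduces in finitely many steps to a β-normal form. -/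
def BetaNormalizable (M : Lam) : Prop :=
  ∃ N, Relation.ReflTransGen Beta M N ∧ BetaNF N

/-- `M` is strongly β-normalizable: no infinite β-reduction sequence starts from `M`. -/
def StronglyNormalizable (M : Lam) : Prop := Acc (fun N M' => Beta M' N) M

end Lam

/-! Rigid resource terms (the nonzero ones), in de Bruijn notation:
`a ::= x | λx.a | ⟨c⟩d⃗` with `d⃗` a list of rigid terms.
The term `0` is represented by `none : Option Rig`. -/
inductive Rig : Type
  | var : ℕ → Rig
  | lam : Rig → Rig
  | app : Rig → List Rig → Rig

namespace Rig

mutual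
/-- Number of free occurrences of the variable `k` in a rigid term. -/
def countR (k : ℕ) : Rig → ℕ
  | var n => if n = k then 1 else 0
  | lam a => countR (k + 1) a
  | app c ds => countR k c + countRList k ds
termination_by a => sizeOf a

def countRList (k : ℕ) : List Rig → ℕ
  | [] => 0
  | d :: ds => countR k d + countRList k ds
termination_by ds => sizeOf ds
end

mutual
/-- Shift the free indices `≥ d` up by one. -/
def liftR (d : ℕ) : Rig → Rig
  | var n => if n < d then var n else var (n + 1)
  | lam a => lam (liftR (d + 1) a)
  | app c ds => app (liftR d c) (liftRList d ds)
termination_by a => sizeOf a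

def liftRList (d : ℕ) : List Rig → List Rig
  | [] => []
  | a :: as => liftR d a :: liftRList d as
termination_by as => sizeOf as
end

mutual
/-- Rigid substitution `a[b⃗/k]`: the list `b⃗` is distributed, in order, over the
free occurrences of the variable `k`; the result is `none` (i.e. `0`) when
`|b⃗| ≠ n_k(a)`. -/
def rsubst (k : ℕ) : Rig → List Rig → Option Rig
  | var n, bs =>
      if n = k then (match bs with | [b] => some b | _ => none)
      else (match bs with
            | [] => some (if k < n then var (n - 1) else var n)
            | _ => none)
  | lam a, bs => (rsubst (k + 1) a (liftRList 0 bs)).map lam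
  | app c ds, bs =>
      match rsubst k c (bs.take (countR k c)), rsubstList k ds (bs.drop (countR k c)) with
      | some c', some ds' => some (app c' ds')
      | _, _ => none
termination_by a _ => sizeOf a

def rsubstList (k : ℕ) : List Rig → List Rig → Option (List Rig)
  | [], bs => if bs.isEmpty then some [] else none
  | d :: ds, bs =>
      match rsubst k d (bs.take (countR k d)), rsubstList k ds (bs.drop (countR k d)) with
      | some d', some ds' => some (d' :: ds')
      | _, _ => none
termination_by ds _ => sizeOf ds
end

/-- One-step rigid resource reduction `→_r` (contextual closure of
`⟨λx.a⟩b⃗ →_r a[b⃗/x]`); the result may be `0` (i.e. `none`), which annihilates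
the surrounding context. -/
inductive RStep : Rig → Option Rig → Prop
  | beta (a : Rig) (bs : List Rig) : RStep (app (lam a) bs) (rsubst 0 a bs)
  | lam {a r} : RStep a r → RStep (lam a) (r.map lam)
  | head {c r} (ds : List Rig) : RStep c r → RStep (app c ds) (r.map (fun c' => app c' ds))
  | arg {d r} (c : Rig) (ds₁ ds₂ : List Rig) :
      RStep d r → RStep (app c (ds₁ ++ d :: ds₂)) (r.map (fun d' => app c (ds₁ ++ d' :: ds₂)))

/-- `→_r` on rigid terms extended with `0`; `0` is inert. -/
inductive RStepO : Option Rig → Option Rig → Prop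
  | mk {a r} : RStep a r → RStepO (some a) r

/-- `r` is a `→_r`-normal form (`0` is one). -/
def RNormal (r : Option Rig) : Prop := ¬∃ r', RStepO r r'

/-- The head of the application spine is a variable, with no λ on the spine. -/
def rNeutral : Rig → Bool
  | var _ => true
  | lam _ => false
  | app c _ => rNeutral c

/-- Rigid head-normal forms among nonzero terms: `λx₁…λxₘ.⟨…⟨x⟩d⃗₁…⟩d⃗ₙ`
(the term `0` is a head-normal form, but it is treated separately). -/
def rIsHNF : Rig → Prop
  | var _ => True
  | lam a => rIsHNF a
  | app c _ => rNeutral c = true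

/-- The rigid head-reduction function `H_r`: contracts the head redex, identity on
head-normal forms; the result may be `0` (i.e. `none`). -/
def Hr : Rig → Option Rig
  | var n => some (var n)
  | lam a => (Hr a).map lam
  | app (lam a) bs => rsubst 0 a bs
  | app (var n) ds => some (app (var n) ds)
  | app (app c₁ c₂) ds => (Hr (app c₁ c₂)).map (fun c' => app c' ds)

/-- `H_r` extended to terms-or-`0`. -/
def HrO : Option Rig → Option Rig := fun r => r.bind Hr

mutual
/-- The rigid left-parallel reduction function `L_r`: identity on `→_r`-normal forms,
applied componentwise to the argument lists on head-normal forms, contraction of the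
head redex otherwise; the result may be `0` (i.e. `none`). -/
def Lr : Rig → Option Rig
  | var n => some (var n)
  | lam a => (Lr a).map lam
  | app (lam a) bs => rsubst 0 a bs
  | app (var n) ds => (LrList ds).map (fun ds' => app (var n) ds')
  | app (app c₁ c₂) ds =>
      if rNeutral (app c₁ c₂) then
        match Lr (app c₁ c₂), LrList ds with
        | some c', some ds' => some (app c' ds')
        | _, _ => none
      else (Lr (app c₁ c₂)).map (fun c' => app c' ds)
termination_by a => sizeOf a

def LrList : List Rig → Option (List Rig)
  | [] => some []
  | d :: ds =>
      match Lr d, LrList ds with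
      | some d', some ds' => some (d' :: ds')
      | _, _ => none
termination_by ds => sizeOf ds
end

/-- `L_r` extended to terms-or-`0`. -/
def LrO : Option Rig → Option Rig := fun r => r.bind Lr

/-- Positive resource terms: no empty list/multiset occurs as the argument of an
application. -/
inductive rPositive : Rig → Prop
  | var (n : ℕ) : rPositive (var n)
  | lam {a} : rPositive a → rPositive (lam a)
  | app {c : Rig} {ds : List Rig} :
      rPositive c → ds ≠ [] → (∀ d ∈ ds, rPositive d) → rPositive (app c ds)

end Rig

/-- The rigid expansion `T_r(M)` of a λ-term (equivalently, the support of its Taylor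
expansion, with multisets presented by lists: `Texp M` is closed under permutation of
argument lists). -/
def Texp : Lam → Set Rig
  | Lam.var n => {Rig.var n}
  | Lam.lam M => {a | ∃ b ∈ Texp M, a = Rig.lam b}
  | Lam.app P Q => {a | ∃ c ∈ Texp P, ∃ ds : List Rig, (∀ d ∈ ds, d ∈ Texp Q) ∧ a = Rig.app c ds}

namespace Rig

/-- The support of the `n`-linear substitution `∂_k a · b̄`, where the multiset `b̄` is
presented by the list `bs`: the finite formal sum (multiset) of all nonzero results of
rigid substitutions along bijective assignments, i.e. permutations of `bs`. -/
def permSubst (k : ℕ) (a : Rig) (bs : List Rig) : Multiset Rig :=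
  ↑(bs.permutations.filterMap (fun bs' => rsubst k a bs'))

/-- One step of non-erasing ε-resource reduction `→^{¬e}_{∂ε}` out of a single resource
term, producing a finite formal sum (a multiset) of resource terms: non-erasing resource
β-steps `⟨λx.a⟩b̄ → ∂_x a · b̄` (with `x ∈ FV(a)`) and resource σ₁-steps, under any
context. -/
inductive NEStep : Rig → Multiset Rig → Prop
  | beta {a : Rig} (bs : List Rig) :
      0 < countR 0 a → NEStep (app (lam a) bs) (permSubst 0 a bs)
  | sigma (a : Rig) (ts qs : List Rig) :
      NEStep (app (app (lam a) ts) qs) {app (lam (app a (liftRList 0 qs))) ts}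
  | lam {a σ} : NEStep a σ → NEStep (lam a) (σ.map lam)
  | head {c σ} (ds : List Rig) : NEStep c σ → NEStep (app c ds) (σ.map (fun c' => app c' ds))
  | arg {d σ} (c : Rig) (ds₁ ds₂ : List Rig) :
      NEStep d σ → NEStep (app c (ds₁ ++ d :: ds₂)) (σ.map (fun d' => app c (ds₁ ++ d' :: ds₂)))

/-- Non-erasing ε-resource reduction on finite formal sums, extended by linearity. -/
def NEStepSum (σ τ : Multiset Rig) : Prop :=
  ∃ (a : Rig) (ρ υ : Multiset Rig), σ = a ::ₘ ρ ∧ NEStep a υ ∧ τ = υ + ρ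

/-- `σ` is a `→^{¬e}_{∂ε}`-normal form. -/
def NENormal (σ : Multiset Rig) : Prop := ¬∃ τ, NEStepSum σ τ

end Rig

/-- One step of non-erasing ε-reduction on λ-terms: non-erasing β-steps
`(λx.M)N → M[N/x]` (with `x ∈ FV(M)`) together with σ₁-steps
`((λx.M)N)P → (λx.MP)N` (`x ∉ FV(P)`), under any context. -/
inductive NEeps : Lam → Lam → Prop
  | beta {M : Lam} (N : Lam) :
      0 < Lam.count 0 M → NEeps (Lam.app (Lam.lam M) N) (Lam.subst M 0 N)
  | sigma (M N P : Lam) :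
      NEeps (Lam.app (Lam.app (Lam.lam M) N) P)
        (Lam.app (Lam.lam (Lam.app M (Lam.lift 0 P))) N)
  | lam {M M'} : NEeps M M' → NEeps (Lam.lam M) (Lam.lam M')
  | appL {P P' Q} : NEeps P P' → NEeps (Lam.app P Q) (Lam.app P' Q)
  | appR {P Q Q'} : NEeps Q Q' → NEeps (Lam.app P Q) (Lam.app P Q')

/-- The set `S` of λ-terms. -/
inductive SLam : Lam → Prop
  | varApp (n : ℕ) (Ms : List Lam) :
      (∀ M ∈ Ms, SLam M) → SLam (Lam.mkApps (Lam.var n) Ms)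
  | lam {M} : SLam M → SLam (Lam.lam M)
  | redex (M₀ M₁ : Lam) (Ms : List Lam) :
      SLam M₁ → SLam (Lam.mkApps (Lam.subst M₀ 0 M₁) Ms) →
      SLam (Lam.mkApps (Lam.app (Lam.lam M₀) M₁) Ms)

/-- λI-terms: every abstraction binds a variable occurring free in its body. -/
def LamI : Lam → Prop
  | Lam.var _ => True
  | Lam.lam M => LamI M ∧ 0 < Lam.count 0 M
  | Lam.app P Q => LamI P ∧ LamI Q

namespace Rig

theorem liftRList_eq_map (d : ℕ) (l : List Rig) : liftRList d l = l.map (liftR d) := by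
  induction l with
  | nil => simp [liftRList]
  | cons a l ih => simp [liftRList, ih]

theorem rsubst_var_iff (k n : ℕ) (bs : List Rig) (u : Rig) :
    rsubst k (var n) bs = some u ↔ (n = k ∧ bs = [u]) ∨
      (n ≠ k ∧ bs = [] ∧ (if k < n then var (n - 1) else var n) = u) := by
  rcases bs with _ | ⟨b, _ | ⟨b', bs⟩⟩ <;> by_cases h : n = k <;> simp [rsubst, h]

mutual
theorem rsubst_length (k : ℕ) : ∀ (a : Rig) (bs : List Rig) (u : Rig),
    rsubst k a bs = some u → bs.length = countR k a
  | var n, bs, u, h => by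
      rw [countR]
      rcases (rsubst_var_iff _ _ _ _).1 h with ⟨hn, rfl⟩ | ⟨hn, rfl, -⟩ <;> simp [hn]
  | lam a, bs, u, h => by
      rw [rsubst] at h
      rw [countR]
      obtain ⟨v, hv, -⟩ := Option.map_eq_some_iff.1 h
      have := rsubst_length (k + 1) a _ _ hv
      simpa [liftRList_eq_map] using this
  | app c ds, bs, u, h => by
      rw [rsubst] at h
      rw [countR]
      split at h
      · rename_i c' ds' h1 h2
        have e1 := rsubst_length k c _ _ h1
        have e2 := rsubstList_length k ds _ _ h2
        simp only [List.length_take, List.length_drop] at e1 e2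
        omega
      · simp at h
termination_by a => sizeOf a

theorem rsubstList_length (k : ℕ) : ∀ (ds : List Rig) (bs : List Rig) (u : List Rig),
    rsubstList k ds bs = some u → bs.length = countRList k ds
  | [], bs, u, h => by
      rw [rsubstList] at h
      rw [countRList]
      split_ifs at h with hb
      simpa using hb
  | d :: ds, bs, u, h => by
      rw [rsubstList] at h
      rw [countRList]
      split at h
      · rename_i c' ds' h1 h2
        have e1 := rsubst_length k d _ _ h1
        have e2 := rsubstList_length k ds _ _ h2
        simp only [List.length_take, List.length_drop] at e1 e2
        omega
      · simp at h
termination_by ds => sizeOf ds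
end

theorem rsubst_app_iff (k : ℕ) (c : Rig) (ds bs : List Rig) (u : Rig) :
    rsubst k (app c ds) bs = some u ↔ ∃ b1 b2 c' ds', bs = b1 ++ b2 ∧
      rsubst k c b1 = some c' ∧ rsubstList k ds b2 = some ds' ∧ u = app c' ds' := by
  constructor
  · intro h
    rw [rsubst] at h
    split at h
    · rename_i c' ds' h1 h2
      exact ⟨_, _, c', ds', (List.take_append_drop _ _).symm, h1, h2, by simpa using h.symm⟩
    · simp at h
  · rintro ⟨b1, b2, c', ds', rfl, h1, h2, rfl⟩
    have e := rsubst_length _ _ _ _ h1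
    rw [rsubst, List.take_left' e, List.drop_left' e, h1, h2]

theorem rsubstList_cons_iff (k : ℕ) (c : Rig) (ds bs : List Rig) (u : List Rig) :
    rsubstList k (c :: ds) bs = some u ↔ ∃ b1 b2 c' ds', bs = b1 ++ b2 ∧
      rsubst k c b1 = some c' ∧ rsubstList k ds b2 = some ds' ∧ u = c' :: ds' := by
  constructor
  · intro h
    rw [rsubstList] at h
    split at h
    · rename_i c' ds' h1 h2
      exact ⟨_, _, c', ds', (List.take_append_drop _ _).symm, h1, h2, by simpa using h.symm⟩
    · simp at h
  · rintro ⟨b1, b2, c', ds', rfl, h1, h2, rfl⟩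
    have e := rsubst_length _ _ _ _ h1
    rw [rsubstList, List.take_left' e, List.drop_left' e, h1, h2]

theorem rsubstList_sets (k : ℕ) (S B U : Set Rig)
    (hU : ∀ u, u ∈ U ↔ ∃ s ∈ S, ∃ ts : List Rig, (∀ t ∈ ts, t ∈ B) ∧ rsubst k s ts = some u)
    (us : List Rig) : (∀ u ∈ us, u ∈ U) ↔
      ∃ ds : List Rig, (∀ d ∈ ds, d ∈ S) ∧ ∃ ts : List Rig, (∀ t ∈ ts, t ∈ B) ∧
        rsubstList k ds ts = some us := by
  constructor
  · induction us with
    | nil => exact fun _ => ⟨[], by simp, [], by simp, by simp [rsubstList]⟩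
    | cons u us ih =>
      intro h
      obtain ⟨ds, hds, ts, hts, e⟩ := ih fun v hv => h v (List.mem_cons_of_mem _ hv)
      obtain ⟨s, hs, ts', hts', e'⟩ := (hU u).1 (h u List.mem_cons_self)
      refine ⟨s :: ds, ?_, ts' ++ ts, ?_, (rsubstList_cons_iff _ _ _ _ _).2
        ⟨_, _, _, _, rfl, e', e, rfl⟩⟩
      · simpa using ⟨hs, hds⟩
      · intro t ht
        exact (List.mem_append.1 ht).elim (hts' t) (hts t)
  · rintro ⟨ds, hds, ts, hts, e⟩
    induction ds generalizing us ts with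
    | nil =>
      rw [rsubstList] at e
      split_ifs at e
      simp_all
    | cons d ds ih =>
      obtain ⟨b1, b2, c', ds', rfl, h1, h2, rfl⟩ := (rsubstList_cons_iff _ _ _ _ _).1 e
      have := ih ds' (fun v hv => hds v (List.mem_cons_of_mem _ hv)) b2
        (fun v hv => hts v (List.mem_append_right _ hv)) h2
      have h' := (hU c').2 ⟨d, hds d List.mem_cons_self, b1,
        fun v hv => hts v (List.mem_append_left _ hv), h1⟩
      simpa using ⟨h', this⟩

theorem list_image (f : Rig → Rig) (S : Set Rig) (l : List Rig) :
    (∀ t ∈ l, t ∈ f '' S) ↔ ∃ l' : List Rig, (∀ t ∈ l', t ∈ S) ∧ l = l'.map f := by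
  constructor
  · induction l with
    | nil => exact fun _ => ⟨[], by simp, rfl⟩
    | cons a l ih =>
      intro h
      obtain ⟨l', h1, rfl⟩ := ih fun v hv => h v (List.mem_cons_of_mem _ hv)
      obtain ⟨b, hb, rfl⟩ := h a List.mem_cons_self
      exact ⟨b :: l', by simpa using ⟨hb, h1⟩, rfl⟩
  · rintro ⟨l', h, rfl⟩ t ht
    obtain ⟨b, hb, rfl⟩ := List.mem_map.1 ht
    exact ⟨b, h b hb, rfl⟩

theorem Texp_lift (N : Lam) : ∀ d, Texp (Lam.lift d N) = liftR d '' Texp N := by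
  induction N with
  | var n =>
    intro d
    simp only [Lam.lift, Texp, Set.image_singleton, liftR]
    split_ifs <;> rfl
  | lam M ih =>
    intro d
    ext u
    simp only [Lam.lift, Texp, ih, Set.mem_image, Set.mem_ofPred_eq]
    constructor
    · rintro ⟨_, ⟨b, hb, rfl⟩, rfl⟩
      exact ⟨_, ⟨b, hb, rfl⟩, by rw [liftR]⟩
    · rintro ⟨_, ⟨b, hb, rfl⟩, rfl⟩
      exact ⟨_, ⟨b, hb, rfl⟩, by rw [liftR]⟩
  | app P Q ihP ihQ =>
    intro d
    ext u
    simp only [Lam.lift, Texp, ihP, ihQ, list_image]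
    constructor
    · rintro ⟨_, ⟨b, hb, rfl⟩, _, ⟨l, hl, rfl⟩, rfl⟩
      exact ⟨_, ⟨b, hb, l, hl, rfl⟩, by rw [liftR, liftRList_eq_map]⟩
    · rintro ⟨_, ⟨b, hb, l, hl, rfl⟩, rfl⟩
      exact ⟨_, ⟨b, hb, rfl⟩, _, ⟨l, hl, rfl⟩, by rw [liftR, liftRList_eq_map]⟩

theorem mem_Texp_subst (M : Lam) : ∀ (N : Lam) (k : ℕ) (u : Rig),
    u ∈ Texp (Lam.subst M k N) ↔
      ∃ s ∈ Texp M, ∃ ts : List Rig, (∀ t ∈ ts, t ∈ Texp N) ∧ rsubst k s ts = some u := by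
  induction M with
  | var n =>
    intro N k u
    simp only [Lam.subst, Texp, Set.mem_singleton_iff, exists_eq_left, rsubst_var_iff]
    by_cases h : n = k
    · simp [h]
    · by_cases h' : k < n <;> simp [h, h', Texp, eq_comm]
  | lam M ih =>
    intro N k u
    simp only [Lam.subst, Texp, ih, Texp_lift, list_image, Set.mem_ofPred_eq]
    constructor
    · rintro ⟨b, ⟨s, hs, _, ⟨l, hl, rfl⟩, e⟩, rfl⟩
      exact ⟨_, ⟨s, hs, rfl⟩, l, hl, by rw [rsubst, liftRList_eq_map, e]; rfl⟩
    · rintro ⟨_, ⟨s, hs, rfl⟩, l, hl, e⟩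
      rw [rsubst, liftRList_eq_map] at e
      obtain ⟨v, hv, rfl⟩ := Option.map_eq_some_iff.1 e
      exact ⟨v, ⟨s, hs, _, ⟨l, hl, rfl⟩, hv⟩, rfl⟩
  | app P Q ihP ihQ =>
    intro N k u
    simp only [Lam.subst, Texp, Set.mem_ofPred_eq,
      rsubstList_sets k (Texp Q) (Texp N) _ (ihQ N k)]
    constructor
    · rintro ⟨c, hc, us, ⟨ds, hds, ts, hts, e⟩, rfl⟩
      obtain ⟨s, hs, ts', hts', e'⟩ := (ihP N k c).1 hc
      refine ⟨_, ⟨s, hs, ds, hds, rfl⟩, ts' ++ ts, ?_, (rsubst_app_iff _ _ _ _ _).2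
        ⟨_, _, _, _, rfl, e', e, rfl⟩⟩
      intro t ht
      exact (List.mem_append.1 ht).elim (hts' t) (hts t)
    · rintro ⟨_, ⟨s, hs, ds, hds, rfl⟩, ts, hts, e⟩
      obtain ⟨b1, b2, c', ds', rfl, h1, h2, rfl⟩ := (rsubst_app_iff _ _ _ _ _).1 e
      exact ⟨c', (ihP N k c').2 ⟨s, hs, b1, fun v hv => hts v (List.mem_append_left _ hv), h1⟩,
        ds', ⟨ds, hds, b2, fun v hv => hts v (List.mem_append_right _ hv), h2⟩, rfl⟩

end Rig

/-- `T(M[N/x]) = ⋃ { supp(∂_x s · t̄) | s ∈ T(M), t̄ a multiset of elements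
of T(N) }` (multisets are presented by lists up to permutation: `Rig.permSubst k s ts`
is the formal sum over all bijective assignments of the resources in `ts` to the
occurrences of the variable `k` in `s`). -/
theorem Taylor_substitution (M N : Lam) (k : ℕ) :
    Texp (Lam.subst M k N) =
      {u : Rig | ∃ s ∈ Texp M, ∃ ts : List Rig,
        (∀ t ∈ ts, t ∈ Texp N) ∧ u ∈ Rig.permSubst k s ts} := by
  ext u
  rw [Rig.mem_Texp_subst]
  simp only [Set.mem_ofPred_eq, Rig.permSubst, Multiset.mem_coe, List.mem_filterMap,
    List.mem_permutations]
  constructor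
  · rintro ⟨s, hs, ts, hts, e⟩
    exact ⟨s, hs, ts, hts, ts, List.Perm.refl _, e⟩
  · rintro ⟨s, hs, ts, hts, bs, hp, e⟩
    exact ⟨s, hs, bs, fun t ht => hts t (hp.mem_iff.1 ht), e⟩
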